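/- Let F be a field of characteristic different from 2 and let ε ∈ F. The Lie algebra L_{6,22}(ε) over F, with basis x₁,…,x₆ and nonzero brackets [x₁,x₂] = x₅ = [x₃,x₄], [x₁,x₃] = x₆, [x₂,x₄] = ε·x₆, is capable. -/

import Mathlib

open Module

universe u

/-- A witness to the capability of a Lie algebra `L` over `F`: a Lie algebra `E`
together with an isomorphism `L ≃ E ⧸ Z(E)`. -/
structure CapableWitness (F : Type u) (L : Type u) [Field F] [LieRing L] [LieAlgebra F L] where
  carrier : Type u
  [lieRing : LieRing carrier]
  [lieAlgebra : LieAlgebra F carrier]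
  equiv : L ≃ₗ⁅F⁆ (carrier ⧸ LieAlgebra.center F carrier)

/-- A Lie algebra `L` over a field `F` is capable if there exists a Lie algebra `E` over `F`
with `L ≅ E ⧸ Z(E)`. -/
def IsCapable (F : Type u) (L : Type u) [Field F] [LieRing L] [LieAlgebra F L] : Prop :=
  Nonempty (CapableWitness F L)

/-- `L` is isomorphic to `L_{6,22}(ε)`: basis `x₁,…,x₆` with `[x₁,x₂]=x₅=[x₃,x₄]`, `[x₁,x₃]=x₆`, `[x₂,x₄]=ε·x₆`. -/
def IsL622 (F : Type u) (L : Type u) [Field F] [LieRing L] [LieAlgebra F L] (ε : F) : Prop :=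
  ∃ b : Basis (Fin 6) F L,
    ⁅b 0, b 1⁆ = b 4 ∧
    ⁅b 2, b 3⁆ = b 4 ∧
    ⁅b 0, b 2⁆ = b 5 ∧
    ⁅b 1, b 3⁆ = ε • b 5 ∧
    ∀ i j : Fin 6, i < j → (i, j) ≠ (0, 1) → (i, j) ≠ (2, 3) → (i, j) ≠ (0, 2) → (i, j) ≠ (1, 3) → ⁅b i, b j⁆ = 0

/-!
Let `x₁*, …, x₆*` be the basis dual to `x₁, …, x₆`. The differential of a dual basis vector is, up
to a global sign, `dx₅* = x₁* ∧ x₂* + x₃* ∧ x₄*`, `dx₆* = x₁* ∧ x₃* + ε x₂* ∧ x₄*` and `dxᵢ* = 0`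
for `i ≤ 4`. Hence `ω = x₃* ∧ x₅* + x₂* ∧ x₆*` is closed: in `dω` the terms `x₃* ∧ x₁* ∧ x₂*` and
`x₂* ∧ x₁* ∧ x₃*` cancel and all others have a repeated factor. The center of `L` lies in the span
of `x₅` and `x₆`, and `ω(x₃, ·)`, `ω(x₂, ·)` read off the coefficients of `x₅` and `x₆` there. So
in the central extension of `L` by `F` defined by `ω`, no nonzero element of `L` lifts to a
central element, and `L` is the quotient by the center.
-/

open LieAlgebra LieModule LieModule.Cohomology

section TwoCocycle

variable {R L M : Type*} [CommRing R] [LieRing L] [LieAlgebra R L] [AddCommGroup M] [Module R M]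
  [LieRingModule L M] [LieModule R L M] [LieModule.IsTrivial L M]

theorem mem_center_ofTwoCocycle_iff (c : twoCocycle R L M) (x : ofTwoCocycle c) :
    x ∈ center R (ofTwoCocycle c) ↔
      x.carrier.1 ∈ center R L ∧ ∀ y, (c : twoCochain R L M) y x.carrier.1 = 0 := by
  have lie_eq_zero_iff (y : ofTwoCocycle c) : ⁅y, x⁆ = 0 ↔
      ⁅y.carrier.1, x.carrier.1⁆ = 0 ∧ (c : twoCochain R L M) y.carrier.1 x.carrier.1 = 0 := by
    rw [bracket_ofTwoCocycle, ← of_zero, (ofProd c).apply_eq_iff_eq, Prod.mk_eq_zero]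
    simp [trivial_lie_zero, ofProd]
  simp only [mem_maxTrivSubmodule, lie_eq_zero_iff, forall_and]
  exact and_congr ⟨fun h y ↦ h ⟨(y, 0)⟩, fun h y ↦ h _⟩ ⟨fun h y ↦ h ⟨(y, 0)⟩, fun h y ↦ h _⟩

end TwoCocycle

section Capability

variable {F L E M : Type u} [Field F] [LieRing L] [LieAlgebra F L] [LieRing E] [LieAlgebra F E]
  [AddCommGroup M] [Module F M]

theorem isCapable_of_surjective_of_ker_eq_center (f : E →ₗ⁅F⁆ L) (hf : Function.Surjective f)
    (hker : f.ker = center F E) : IsCapable F L := by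
  have hrange : f.range = ⊤ := f.range_eq_top.2 hf
  have e : (E ⧸ f.ker) ≃ₗ⁅F⁆ L :=
    f.quotKerEquivRange.trans ((LieEquiv.ofEq _ _ (by rw [hrange])).trans LieSubalgebra.topEquiv)
  rw [hker] at e
  exact ⟨⟨E, e.symm⟩⟩

theorem isCapable_of_twoCocycle [LieRingModule L M] [LieModule F L M] [LieModule.IsTrivial L M]
    (c : twoCocycle F L M)
    (hc : ∀ x ∈ center F L, (∀ y, (c : twoCochain F L M) y x = 0) → x = 0) :
    IsCapable F L := by
  let π : ofTwoCocycle c →ₗ⁅F⁆ L :=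
    { toFun x := x.carrier.1
      map_add' _ _ := rfl
      map_smul' _ _ := rfl
      map_lie' := rfl }
  refine isCapable_of_surjective_of_ker_eq_center π (fun x ↦ ⟨⟨(x, 0)⟩, rfl⟩) ?_
  ext x
  rw [mem_center_ofTwoCocycle_iff, LieHom.mem_ker]
  change x.carrier.1 = 0 ↔ _
  refine ⟨fun hx ↦ ?_, fun hx ↦ hc _ hx.1 hx.2⟩
  simp [hx]

theorem isCapable_of_isAlt (B : L →ₗ[F] L →ₗ[F] M) (hB : B.IsAlt)
    (hclosed : ∀ x y z, B x ⁅y, z⁆ = B ⁅x, y⁆ z + B y ⁅x, z⁆)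
    (hcenter : ∀ x ∈ center F L, (∀ y, B y x = 0) → x = 0) : IsCapable F L :=
  let c : twoCochain F L (TrivialLieModule F L M) :=
    ⟨B.compr₂ (TrivialLieModule.equiv F L M).symm.toLinearMap, hB⟩
  isCapable_of_twoCocycle ⟨c, (mem_twoCocycle_iff_of_trivial F L _ c).2 hclosed⟩ hcenter

end Capability

section Alternating

variable {R M N ι : Type*} [CommRing R] [AddCommGroup M] [Module R M] [AddCommGroup N] [Module R N]

theorem ext_isAlt_of_lt [LinearOrder ι] (b : Basis ι R M) {B C : M →ₗ[R] M →ₗ[R] N}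
    (hB : B.IsAlt) (hC : C.IsAlt) (h : ∀ i j, i < j → B (b i) (b j) = C (b i) (b j)) : B = C := by
  refine LinearMap.ext_basis b b fun i j ↦ ?_
  rcases lt_trichotomy i j with hij | rfl | hji
  · exact h i j hij
  · rw [hB.self_eq_zero, hC.self_eq_zero]
  · rw [← hB.neg, ← hC.neg, h j i hji]

/-- The exterior product `f ∧ g` of two linear forms, as a bilinear form, normalized without the
factor `1 / 2`. -/
def wedge (f g : Dual R M) : LinearMap.BilinForm R M :=
  f.smulRight g - g.smulRight f

theorem wedge_apply (f g : Dual R M) (x y : M) : wedge f g x y = f x * g y - g x * f y := rfl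

theorem isAlt_wedge (f g : Dual R M) : (wedge f g).IsAlt := fun x ↦ by
  rw [wedge_apply, mul_comm, sub_self]

end Alternating

/-- The relations of `L_{6,22}(ε)` in the basis `b`, over an arbitrary commutative ring. -/
structure IsL622Basis {R L : Type*} [CommRing R] [LieRing L] [LieAlgebra R L] (ε : R)
    (b : Basis (Fin 6) R L) : Prop where
  lie_zero_one : ⁅b 0, b 1⁆ = b 4
  lie_two_three : ⁅b 2, b 3⁆ = b 4
  lie_zero_two : ⁅b 0, b 2⁆ = b 5
  lie_one_three : ⁅b 1, b 3⁆ = ε • b 5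
  lie_eq_zero : ∀ i j : Fin 6, i < j → (i, j) ≠ (0, 1) → (i, j) ≠ (2, 3) → (i, j) ≠ (0, 2) →
    (i, j) ≠ (1, 3) → ⁅b i, b j⁆ = 0

namespace IsL622Basis

variable {R L : Type*} [CommRing R] [LieRing L] [LieAlgebra R L] {ε : R} {b : Basis (Fin 6) R L}

theorem lie_eq (h : IsL622Basis ε b) (x y : L) :
    ⁅x, y⁆ = (wedge (b.coord 0) (b.coord 1) + wedge (b.coord 2) (b.coord 3)) x y • b 4 +
      (wedge (b.coord 0) (b.coord 2) + ε • wedge (b.coord 1) (b.coord 3)) x y • b 5 := by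
  let rhs : L →ₗ[R] L →ₗ[R] L :=
    (wedge (b.coord 0) (b.coord 1) + wedge (b.coord 2) (b.coord 3)).compr₂
      (LinearMap.toSpanSingleton R L (b 4)) +
    (wedge (b.coord 0) (b.coord 2) + ε • wedge (b.coord 1) (b.coord 3)).compr₂
      (LinearMap.toSpanSingleton R L (b 5))
  suffices (toEnd R L L : L →ₗ[R] L →ₗ[R] L) = rhs from
    LinearMap.congr_fun₂ this x y
  refine ext_isAlt_of_lt b (fun x ↦ lie_self x) (fun x ↦ ?_) fun i j hij ↦ ?_
  · simp [rhs, (isAlt_wedge _ _).self_eq_zero]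
  · change ⁅b i, b j⁆ = rhs (b i) (b j)
    have lie_eq_zero := h.lie_eq_zero i j hij
    fin_cases i <;> fin_cases j <;>
      simp_all [rhs, wedge_apply, h.lie_zero_one, h.lie_two_three, h.lie_zero_two, h.lie_one_three]

theorem coord_lie_of_lt_four (h : IsL622Basis ε b) (x y : L) {i : Fin 6} (hi : i < 4) :
    b.coord i ⁅x, y⁆ = 0 := by
  have h4 : (4 : Fin 6) ≠ i := hi.ne'
  have h5 : (5 : Fin 6) ≠ i := (hi.trans (by decide)).ne'
  simp [h.lie_eq x y, h4, h5]

theorem coord_four_lie (h : IsL622Basis ε b) (x y : L) :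
    b.coord 4 ⁅x, y⁆ =
      (wedge (b.coord 0) (b.coord 1) + wedge (b.coord 2) (b.coord 3)) x y := by
  simp [h.lie_eq x y]

theorem coord_five_lie (h : IsL622Basis ε b) (x y : L) :
    b.coord 5 ⁅x, y⁆ =
      (wedge (b.coord 0) (b.coord 2) + ε • wedge (b.coord 1) (b.coord 3)) x y := by
  simp [h.lie_eq x y]

theorem coord_eq_zero_of_mem_center (h : IsL622Basis ε b) {x : L} (hx : x ∈ center R L)
    {i : Fin 6} (hi : i < 4) : b.coord i x = 0 := by
  have hwedge (y : L) :
      (wedge (b.coord 0) (b.coord 1) + wedge (b.coord 2) (b.coord 3)) y x = 0 := by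
    rw [← h.coord_four_lie, (mem_maxTrivSubmodule R L L x).1 hx y, map_zero]
  have h1 : b.coord 1 x = 0 := by simpa [wedge_apply] using hwedge (b 0)
  have h0 : b.coord 0 x = 0 := by simpa [wedge_apply] using hwedge (b 1)
  have h3 : b.coord 3 x = 0 := by simpa [wedge_apply] using hwedge (b 2)
  have h2 : b.coord 2 x = 0 := by simpa [wedge_apply] using hwedge (b 3)
  fin_cases i <;> first | assumption | exact absurd hi (by decide)

/-- The closed form `x₃* ∧ x₅* + x₂* ∧ x₆*`, which defines a central extension of `L_{6,22}(ε)`.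
The indices are shifted by one. -/
noncomputable def closedForm (b : Basis (Fin 6) R L) : LinearMap.BilinForm R L :=
  wedge (b.coord 2) (b.coord 4) + wedge (b.coord 1) (b.coord 5)

theorem isAlt_closedForm (b : Basis (Fin 6) R L) : (closedForm b).IsAlt :=
  (isAlt_wedge _ _).add (isAlt_wedge _ _)

theorem closedForm_lie (h : IsL622Basis ε b) (x y z : L) :
    closedForm b x ⁅y, z⁆ = closedForm b ⁅x, y⁆ z + closedForm b y ⁅x, z⁆ := by
  have lie_one (u v : L) : b.coord 1 ⁅u, v⁆ = 0 := h.coord_lie_of_lt_four u v (by decide)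
  have lie_two (u v : L) : b.coord 2 ⁅u, v⁆ = 0 := h.coord_lie_of_lt_four u v (by decide)
  simp only [closedForm, LinearMap.add_apply, LinearMap.smul_apply, smul_eq_mul, wedge_apply,
    lie_one, lie_two, h.coord_four_lie, h.coord_five_lie]
  ring

theorem eq_zero_of_mem_center_of_closedForm_eq_zero (h : IsL622Basis ε b) {x : L}
    (hx : x ∈ center R L) (hform : ∀ y, closedForm b y x = 0) : x = 0 := by
  have h4 : b.coord 4 x = 0 := by simpa [closedForm, wedge_apply] using hform (b 2)
  have h5 : b.coord 5 x = 0 := by simpa [closedForm, wedge_apply] using hform (b 1)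
  refine b.forall_coord_eq_zero_iff.1 fun i ↦ ?_
  obtain hi | rfl | rfl : i < 4 ∨ i = 4 ∨ i = 5 := by omega
  exacts [h.coord_eq_zero_of_mem_center hx hi, h4, h5]

end IsL622Basis

theorem L622_isCapable_general (F L : Type u) [Field F] [LieRing L] [LieAlgebra F L] (ε : F)
    (h : IsL622 F L ε) : IsCapable F L := by
  obtain ⟨b, h01, h23, h02, h13, hzero⟩ := h
  have hb : IsL622Basis ε b := ⟨h01, h23, h02, h13, hzero⟩
  exact isCapable_of_isAlt (IsL622Basis.closedForm b) (IsL622Basis.isAlt_closedForm b)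
    hb.closedForm_lie fun _ ↦ hb.eq_zero_of_mem_center_of_closedForm_eq_zero

/-- Over a field of characteristic different from 2, the Lie algebra `L_{6,22}(ε)`
is capable. -/
theorem L622_isCapable
    (F L : Type u) [Field F] [LieRing L] [LieAlgebra F L]
    (hchar : ringChar F ≠ 2) (ε : F)
    (h : IsL622 F L ε) :
    IsCapable F L :=
  L622_isCapable_general F L ε h
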